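/- For every increment function δ of size n and every Dyck word P of size n, the number of elements covering P in the alt-Tamari poset Tam^δ_n equals the number of valleys of P (occurrences of the factor du). Consequently, for every two increment functions δ and δ' of size n, the poset Tam^δ_n and the poset Tam^{δ'}_n have the same number of covering relations, namely binomial(2n−1, n−2). -/

import Mathlib

/-!
Common definitions.  A letter of a word is a `Bool`: `true` is an up step `u`,
`false` is a down step `d`.  Positions in words are 0-based.
-/

/-- A (possibly empty) Dyck word: as many `u`'s as `d`'s, and every
prefix has at least as many `u`'s as `d`'s. -/
def IsDyckPath (w : List Bool) : Prop :=
  w.count true = w.count false ∧ ∀ p, p <+: w → p.count false ≤ p.count true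

/-- A Dyck word of size `n`: `n` up steps, `n` down steps, every prefix has
at least as many `u`'s as `d`'s. -/
def IsDyckWord (n : ℕ) (w : List Bool) : Prop :=
  w.count true = n ∧ w.count false = n ∧ ∀ p, p <+: w → p.count false ≤ p.count true

/-- The set of Dyck words of size `n`. -/
def DyckSet (n : ℕ) : Set (List Bool) := {w | IsDyckWord n w}

/-- An increment function: a `{0,1}`-valued function (the paper's `δ : {1,…,n} → {0,1}`;
only the values on `{1,…,n}` are ever used). -/
def IsIncFun (δ : ℕ → ℤ) : Prop := ∀ i, δ i = 0 ∨ δ i = 1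

/-- The 0-based position in `w` of the `i`-th up step `u_i` (`i` is 1-based). -/
def upPos (w : List Bool) (i : ℕ) : ℕ :=
  ((List.range w.length).filter fun q => w.getD q false = true).getD (i - 1) 0

/-- `h_i(w)`: the (1-based, between 1 and 2n) position of the up step `u_i` in `w`. -/
def hpos (w : List Bool) (i : ℕ) : ℕ := upPos w i + 1

/-- The change of δ-altitude produced by the letter at position `q` of `w`:
the up step `u_i` contributes `δ i`, a down step contributes `-1`. -/
def stepVal (δ : ℕ → ℤ) (w : List Bool) (q : ℕ) : ℤ :=
  if w.getD q false = true then δ ((w.take (q + 1)).count true) else -1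

/-- The δ-elevation of the factor of `w` occupying positions `a, …, b-1`. -/
def elev (δ : ℕ → ℤ) (w : List Bool) (a b : ℕ) : ℤ :=
  ∑ q ∈ Finset.Ico a b, stepVal δ w q

/-- `C` is the δ-excursion of the up step of `w` at position `p`:
the smallest (nonempty) factor of `w` starting at `p` whose δ-elevation is `0`. -/
def IsDeltaExcAt (δ : ℕ → ℤ) (w : List Bool) (p : ℕ) (C : List Bool) : Prop :=
  w.getD p false = true ∧
  ∃ m, 0 < m ∧ p + m ≤ w.length ∧ C = (w.drop p).take m ∧
    elev δ w p (p + m) = 0 ∧ ∀ m', 0 < m' → m' < m → elev δ w p (p + m') ≠ 0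

/-- `C` is the excursion of the up step of `w` at position `p`: the smallest factor
of `w` starting at `p` that is itself a Dyck word. -/
def IsExcursionAt (w : List Bool) (p : ℕ) (C : List Bool) : Prop :=
  w.getD p false = true ∧
  ∃ m, 0 < m ∧ p + m ≤ w.length ∧ C = (w.drop p).take m ∧ IsDyckPath C ∧
    ∀ m', 0 < m' → m' < m → ¬ IsDyckPath ((w.drop p).take m')

/-- `ℓ_i(w; δ)`: the length of the δ-excursion of `u_i` in `w`. -/
noncomputable def excLen (δ : ℕ → ℤ) (w : List Bool) (i : ℕ) : ℕ :=
  sInf {m | 0 < m ∧ elev δ w (upPos w i) (upPos w i + m) = 0}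

/-- `Q` is the δ-rotation of `P` at some up step: `P = A d C B` with `d u_i` a valley
and `C` the δ-excursion of `u_i`, and `Q = A C d B`. -/
def DeltaRot (δ : ℕ → ℤ) (P Q : List Bool) : Prop :=
  ∃ A C B, P = A ++ false :: (C ++ B) ∧ Q = A ++ (C ++ false :: B) ∧
    IsDeltaExcAt δ P (A.length + 1) C

/-- The alt-Tamari order `Tam^δ`: reflexive transitive closure of δ-rotations. -/
def altLE (δ : ℕ → ℤ) : List Bool → List Bool → Prop :=
  Relation.ReflTransGen (DeltaRot δ)

/-- The Tamari order: the alt-Tamari order for `δ ≡ 1` (the δ-excursion of any up step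
is then its excursion). -/
def tamLE : List Bool → List Bool → Prop := altLE fun _ => 1

/-- The height (number of `u`'s minus number of `d`'s) of the length-`j` prefix of `w`. -/
def prefHeight (w : List Bool) (j : ℕ) : ℤ :=
  ((w.take j).count true : ℤ) - ((w.take j).count false : ℤ)

/-- The Dyck (inclusion) order: every prefix height of `P` is at most that of `Q`. -/
def dyckLE (P Q : List Bool) : Prop := ∀ j, prefHeight P j ≤ prefHeight Q j

/-- Strict version of a relation `le`. -/
def ltOf (le : List Bool → List Bool → Prop) (P Q : List Bool) : Prop :=
  le P Q ∧ ¬ le Q P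

/-- There is a strict chain `P = c 0 < c 1 < ⋯ < c k = Q` inside `S`. -/
def HasChainIn (S : Set (List Bool)) (le : List Bool → List Bool → Prop)
    (P Q : List Bool) (k : ℕ) : Prop :=
  ∃ c : ℕ → List Bool, c 0 = P ∧ c k = Q ∧ (∀ i ≤ k, c i ∈ S) ∧
    ∀ i < k, ltOf le (c i) (c (i + 1))

/-- The interval `[P,Q]` of the poset `(S, le)` has height `k`: `k` is the maximal
length of a chain from `P` to `Q`. -/
def IntervalHeight (S : Set (List Bool)) (le : List Bool → List Bool → Prop)
    (P Q : List Bool) (k : ℕ) : Prop :=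
  HasChainIn S le P Q k ∧ ∀ m, HasChainIn S le P Q m → m ≤ k

/-- The interval `[P,Q]` of the poset `(S, le)` is linear: it is totally ordered. -/
def LinearInterval (S : Set (List Bool)) (le : List Bool → List Bool → Prop)
    (P Q : List Bool) : Prop :=
  P ∈ S ∧ Q ∈ S ∧ le P Q ∧
  ∀ R R', R ∈ S → R' ∈ S → le P R → le R Q → le P R' → le R' Q → le R R' ∨ le R' R

/-- `Q` covers `P` in the poset `(S, le)`. -/
def CovIn (S : Set (List Bool)) (le : List Bool → List Bool → Prop)
    (P Q : List Bool) : Prop :=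
  P ∈ S ∧ Q ∈ S ∧ ltOf le P Q ∧ ∀ R ∈ S, ¬ (ltOf le P R ∧ ltOf le R Q)

/-- The number of valleys (factors `du`) of `w`. -/
def valleys (w : List Bool) : ℕ :=
  ((List.range w.length).filter fun q => !w.getD q true && w.getD (q + 1) false).length

/-- The number of down steps of `w` preceding its `k`-th up step (`k` is 0-based); it is the
total number of down steps if there is no such up step. -/
def downsBefore : List Bool → ℕ → ℕ
  | [], _ => 0
  | false :: w, k => downsBefore w k + 1
  | true :: _, 0 => 0
  | true :: w, k + 1 => downsBefore w k

theorem downsBefore_append (A B : List Bool) (k : ℕ) :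
    downsBefore (A ++ B) k = if k < A.count true then downsBefore A k
      else A.count false + downsBefore B (k - A.count true) := by
  induction A generalizing k with
  | nil => simp
  | cons b A ih =>
    cases b with
    | false =>
      simp only [List.cons_append, downsBefore, ih, List.count_cons]
      split_ifs <;> simp_all <;> omega
    | true =>
      cases k with
      | zero => simp [downsBefore]
      | succ k => simp [downsBefore, ih]

theorem downsBefore_le_count (w : List Bool) (k : ℕ) : downsBefore w k ≤ w.count false := by
  induction w generalizing k with
  | nil => simp [downsBefore]
  | cons b w ih =>
    cases b with
    | false => simpa [downsBefore] using ih k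
    | true =>
      cases k with
      | zero => simp [downsBefore]
      | succ k => simpa [downsBefore] using ih k

theorem exists_append_downsBefore (w : List Bool) (k : ℕ) (hk : k ≤ w.count true) :
    ∃ p t, w = p ++ t ∧ p.count true = k ∧ p.count false = downsBefore w k := by
  induction w generalizing k with
  | nil => exact ⟨[], [], by simp_all [downsBefore]⟩
  | cons b w ih =>
    cases b with
    | false =>
      obtain ⟨p, t, rfl, h1, h2⟩ := ih k (by simpa using hk)
      exact ⟨false :: p, t, by simp, by simpa using h1, by simp [downsBefore, h2]⟩
    | true =>
      cases k with
      | zero => exact ⟨[], true :: w, by simp [downsBefore]⟩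
      | succ k =>
        obtain ⟨p, t, rfl, h1, h2⟩ := ih k (by simpa using hk)
        exact ⟨true :: p, t, by simp, by simp [h1], by simp [downsBefore, h2]⟩

theorem isDyckWord_iff_downsBefore (n : ℕ) (w : List Bool) :
    IsDyckWord n w ↔ w.count true = n ∧ w.count false = n ∧ ∀ k, downsBefore w k ≤ k := by
  refine and_congr_right fun h1 => and_congr_right fun h2 => ⟨fun h k => ?_, fun h p hp => ?_⟩
  · rcases le_total k (w.count true) with hk | hk
    · obtain ⟨p, t, rfl, h3, h4⟩ := exists_append_downsBefore w k hk
      have := h p (List.prefix_append p t)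
      omega
    · have := downsBefore_le_count w k
      omega
  · obtain ⟨t, rfl⟩ := hp
    have := h (p.count true)
    rw [downsBefore_append] at this
    simp at this
    omega

theorem downsBefore_rotation (A C B : List Bool) (k : ℕ) :
    downsBefore (A ++ false :: (C ++ B)) k = downsBefore (A ++ (C ++ false :: B)) k +
      if A.count true ≤ k ∧ k < A.count true + C.count true then 1 else 0 := by
  simp only [downsBefore_append, downsBefore]
  split_ifs <;> omega

/-- The `δ`-altitude reached by reading `w` after a word with `a` up steps. -/
def relAlt (δ : ℕ → ℤ) (a : ℕ) (w : List Bool) : ℤ :=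
  ∑ l ∈ Finset.range (w.count true), δ (a + l + 1) - w.count false

theorem relAlt_append_true (δ : ℕ → ℤ) (a : ℕ) (w : List Bool) :
    relAlt δ a (w ++ [true]) = relAlt δ a w + δ (a + w.count true + 1) := by
  simp only [relAlt, List.count_append, List.count_singleton_self, Finset.sum_range_succ]
  simp
  ring

theorem relAlt_append_false (δ : ℕ → ℤ) (a : ℕ) (w : List Bool) :
    relAlt δ a (w ++ [false]) = relAlt δ a w - 1 := by
  simp [relAlt]
  ring

theorem elev_append (δ : ℕ → ℤ) (A W : List Bool) (j : ℕ) (hj : j ≤ W.length) :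
    elev δ (A ++ W) A.length (A.length + j) = relAlt δ (A.count true) (W.take j) := by
  induction j with
  | zero => simp [elev, relAlt]
  | succ j ih =>
    have ih := ih (by omega)
    have hj' : j < W.length := hj
    rw [elev] at ih ⊢
    rw [← add_assoc, Finset.sum_Ico_succ_top (by omega), ih, ← List.take_concat_get' W j hj',
      stepVal]
    have h1 : (A ++ W).getD (A.length + j) false = W[j] := by simp [hj']
    have h2 : (A ++ W).take (A.length + j + 1) = A ++ (W.take j ++ [W[j]]) := by
      rw [add_assoc, List.take_length_add_append, List.take_concat_get' W j hj']
    rw [h1, h2]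
    cases W[j] with
    | true => simp [relAlt_append_true, List.count_append, add_assoc]
    | false => simp [relAlt_append_false]; ring

/-- `C` is a `δ`-excursion when read after a word with `a` up steps. -/
def IsRelExc (δ : ℕ → ℤ) (a : ℕ) (C : List Bool) : Prop :=
  (∃ C', C = true :: C') ∧ relAlt δ a C = 0 ∧
    ∀ j, 0 < j → j < C.length → relAlt δ a (C.take j) ≠ 0

theorem isDeltaExcAt_iff (δ : ℕ → ℤ) (A C B : List Bool) :
    IsDeltaExcAt δ (A ++ false :: (C ++ B)) (A.length + 1) C ↔
      IsRelExc δ (A.count true) C := by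
  have key : ∀ j, j ≤ C.length → elev δ (A ++ false :: (C ++ B)) (A.length + 1)
      (A.length + 1 + j) = relAlt δ (A.count true) (C.take j) := by
    intro j hj
    have := elev_append δ (A ++ [false]) (C ++ B) j (by simp; omega)
    simpa [List.take_append_of_le_length hj] using this
  have hd : (A ++ false :: (C ++ B)).drop (A.length + 1) = C ++ B := by simp
  have hg : (A ++ false :: (C ++ B)).getD (A.length + 1) false = (C ++ B).getD 0 false := by
    simp [List.getD_eq_getElem?_getD, List.getElem?_append_right]
  rw [IsDeltaExcAt, hd, hg]
  constructor
  · rintro ⟨h1, m, hm, hm', hC, h0, hmin⟩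
    have hlen : C.length = m := by
      have := congrArg List.length hC
      simp at this hm'
      omega
    subst hlen
    refine ⟨?_, ?_, fun j hj hj' => ?_⟩
    · cases C with
      | nil => simp at hm
      | cons b C => exact ⟨C, by simpa using h1⟩
    · simpa [key] using h0
    · rw [← key j hj'.le]
      exact hmin j hj hj'
  · rintro ⟨⟨C', rfl⟩, h0, hmin⟩
    refine ⟨by simp, (true :: C').length, by simp, by simp; omega, by simp, ?_, ?_⟩
    · rw [key _ le_rfl, List.take_length, h0]
    · intro j hj hj'
      rw [key j hj'.le]
      exact hmin j hj hj'

theorem deltaRot_iff (δ : ℕ → ℤ) (P Q : List Bool) :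
    DeltaRot δ P Q ↔ ∃ A C B, P = A ++ false :: (C ++ B) ∧ Q = A ++ (C ++ false :: B) ∧
      IsRelExc δ (A.count true) C := by
  constructor
  · rintro ⟨A, C, B, rfl, hQ, h⟩
    exact ⟨A, C, B, rfl, hQ, (isDeltaExcAt_iff δ A C B).1 h⟩
  · rintro ⟨A, C, B, rfl, hQ, h⟩
    exact ⟨A, C, B, rfl, hQ, (isDeltaExcAt_iff δ A C B).2 h⟩

theorem relAlt_take_succ (δ : ℕ → ℤ) (hδ : IsIncFun δ) (a : ℕ) (W : List Bool) (j : ℕ) :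
    relAlt δ a (W.take j) - 1 ≤ relAlt δ a (W.take (j + 1)) := by
  rcases lt_or_ge j W.length with hj | hj
  · rw [← List.take_concat_get' W j hj]
    cases W[j] with
    | true =>
      rw [relAlt_append_true]
      rcases hδ (a + (W.take j).count true + 1) with h | h <;> omega
    | false => rw [relAlt_append_false]
  · rw [List.take_of_length_le hj, List.take_of_length_le (by omega)]
    omega

theorem relAlt_take_one (δ : ℕ → ℤ) (hδ : IsIncFun δ) (a : ℕ) (W : List Bool) :
    0 ≤ relAlt δ a ((true :: W).take 1) := by
  have := hδ (a + 1)
  simp [relAlt]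
  omega

theorem IsRelExc.relAlt_take_pos {δ : ℕ → ℤ} (hδ : IsIncFun δ) {a : ℕ} {C : List Bool}
    (h : IsRelExc δ a C) (j : ℕ) (hj : 0 < j) (hj' : j < C.length) :
    0 < relAlt δ a (C.take j) := by
  obtain ⟨⟨C', rfl⟩, -, hmin⟩ := h
  induction j, Nat.succ_le_of_lt hj using Nat.le_induction with
  | base => exact lt_of_le_of_ne (relAlt_take_one δ hδ a C') (hmin _ hj hj').symm
  | succ j hj0 ih =>
    have h1 := ih (by omega) (by omega)
    have h2 := relAlt_take_succ δ hδ a (true :: C') j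
    have h3 := hmin _ hj hj'
    omega

theorem IsRelExc.downsBefore_lt {δ : ℕ → ℤ} (hδ : IsIncFun δ) {a : ℕ} {C : List Bool}
    (h : IsRelExc δ a C) (k : ℕ) (hk : 0 < k) (hk' : k < C.count true) :
    (downsBefore C k : ℤ) < ∑ l ∈ Finset.range k, δ (a + l + 1) := by
  obtain ⟨p, t, hpt, h1, h2⟩ := exists_append_downsBefore C k hk'.le
  have hp : 0 < p.length := by
    have := List.count_le_length (a := true) (l := p)
    omega
  have ht : 0 < t.length := by
    have := List.count_le_length (a := true) (l := t)
    rw [hpt, List.count_append] at hk'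
    omega
  have := h.relAlt_take_pos hδ p.length hp (by rw [hpt, List.length_append]; omega)
  rw [hpt, List.take_left, relAlt, h1, h2] at this
  omega

theorem exists_isRelExc_take (δ : ℕ → ℤ) (hδ : IsIncFun δ) (a : ℕ) (W : List Bool)
    (hW : relAlt δ a (true :: W) ≤ 0) : ∃ C B, true :: W = C ++ B ∧ IsRelExc δ a C := by
  classical
  have hex : ∃ j, 0 < j ∧ relAlt δ a ((true :: W).take j) ≤ 0 :=
    ⟨(true :: W).length, by simp, by simpa using hW⟩
  obtain ⟨h0, hle⟩ := Nat.find_spec hex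
  have hmin : ∀ j, 0 < j → j < Nat.find hex → 0 < relAlt δ a ((true :: W).take j) := by
    intro j hj hj'
    have := Nat.find_min hex hj'
    simp only [not_and, not_le] at this
    exact this hj
  generalize Nat.find hex = j at h0 hle hmin
  obtain ⟨j, rfl⟩ := Nat.exists_eq_add_of_lt h0
  rw [zero_add] at *
  refine ⟨(true :: W).take (j + 1), (true :: W).drop (j + 1), by simp, ⟨W.take j, by simp⟩,
    le_antisymm hle ?_, fun i hi hi' => ?_⟩
  · rcases Nat.eq_zero_or_pos j with rfl | hj
    · exact relAlt_take_one δ hδ a W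
    · have h1 := relAlt_take_succ δ hδ a (true :: W) j
      have h2 := hmin j hj (by omega)
      omega
  · rw [List.take_take]
    simp only [List.length_take] at hi'
    rw [min_eq_left (by omega)]
    exact (hmin i hi (by omega)).ne'

theorem IsRelExc.length_le {δ : ℕ → ℤ} {a : ℕ} {C B C' B' : List Bool} (h : IsRelExc δ a C)
    (h' : IsRelExc δ a C') (heq : C ++ B = C' ++ B') : C.length ≤ C'.length := by
  by_contra! hlt
  have hC' : C' = C.take C'.length := by
    have := congrArg (List.take C'.length) heq
    rw [List.take_append_of_le_length hlt.le, List.take_left] at this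
    exact this.symm
  obtain ⟨⟨_, hne⟩, h0, -⟩ := h'
  refine h.2.2 C'.length (by simp [hne]) hlt ?_
  rw [← hC', h0]

theorem IsRelExc.unique {δ : ℕ → ℤ} {a : ℕ} {C B C' B' : List Bool} (h : IsRelExc δ a C)
    (h' : IsRelExc δ a C') (heq : C ++ B = C' ++ B') : C = C' ∧ B = B' :=
  List.append_inj heq (le_antisymm (h.length_le h' heq) (h'.length_le h heq.symm))

theorem valley_unique {A B A' B' : List Bool}
    (h : A ++ false :: true :: B = A' ++ false :: true :: B')
    (hc : A.count true = A'.count true) : A = A' ∧ B = B' := by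
  have key : ∀ {A B A' B' D : List Bool}, A' = A ++ D → false :: true :: B =
      D ++ false :: true :: B' → A.count true = A'.count true → D = [] := by
    intro A B A' B' D h1 h2 h3
    subst h1
    rw [List.count_append] at h3
    match D, h2 with
    | [], _ => rfl
    | [_], h2 => simp at h2
    | x :: y :: D, h2 =>
      simp only [List.cons_append, List.cons.injEq] at h2
      obtain ⟨rfl, rfl, -⟩ := h2
      simp at h3
  rcases List.append_eq_append_iff.1 h with ⟨D, h1, h2⟩ | ⟨D, h1, h2⟩
  · have := key h1 h2 hc
    subst this
    simp_all
  · have := key h1 h2 hc.symm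
    subst this
    simp_all

theorem DeltaRot.downsBefore_le {δ : ℕ → ℤ} {P Q : List Bool} (h : DeltaRot δ P Q) (k : ℕ) :
    downsBefore Q k ≤ downsBefore P k := by
  obtain ⟨A, C, B, rfl, rfl, -⟩ := h
  rw [downsBefore_rotation]
  omega

theorem altLE.downsBefore_le {δ : ℕ → ℤ} {P Q : List Bool} (h : altLE δ P Q) (k : ℕ) :
    downsBefore Q k ≤ downsBefore P k := by
  induction h with
  | refl => exact le_rfl
  | tail _ h ih => exact (h.downsBefore_le k).trans ih

theorem IsRelExc.count_pos {δ : ℕ → ℤ} {a : ℕ} {C : List Bool} (h : IsRelExc δ a C) :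
    0 < C.count true := by
  obtain ⟨⟨C', rfl⟩, -⟩ := h
  simp

theorem DeltaRot.not_altLE {δ : ℕ → ℤ} {P Q : List Bool} (h : DeltaRot δ P Q) :
    ¬ altLE δ Q P := by
  intro hle
  obtain ⟨A, C, B, rfl, rfl, hC⟩ := (deltaRot_iff δ P Q).1 h
  have h1 := hle.downsBefore_le (A.count true)
  rw [downsBefore_rotation, if_pos ⟨le_rfl, by have := hC.count_pos; omega⟩] at h1
  omega

theorem altLE.antisymm {δ : ℕ → ℤ} {P Q : List Bool} (h : altLE δ P Q) (h' : altLE δ Q P) :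
    P = Q := by
  rcases Relation.ReflTransGen.cases_head h with h1 | ⟨R, h1, h2⟩
  · exact h1
  · exact absurd (Relation.ReflTransGen.trans h2 h') h1.not_altLE

theorem DeltaRot.isDyckWord {δ : ℕ → ℤ} {n : ℕ} {P Q : List Bool} (h : DeltaRot δ P Q)
    (hP : IsDyckWord n P) : IsDyckWord n Q := by
  rw [isDyckWord_iff_downsBefore] at hP ⊢
  obtain ⟨h1, h2, h3⟩ := hP
  refine ⟨?_, ?_, fun k => (h.downsBefore_le k).trans (h3 k)⟩
  all_goals
    obtain ⟨A, C, B, rfl, rfl, -⟩ := h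
    simp at h1 h2 ⊢
    omega

/-- Two rotations of the same word at up steps with the same index coincide. -/
theorem rotation_unique {δ : ℕ → ℤ} {A C B A' C' B' : List Bool}
    (h : A ++ false :: (C ++ B) = A' ++ false :: (C' ++ B'))
    (hc : A.count true = A'.count true) (hC : IsRelExc δ (A.count true) C)
    (hC' : IsRelExc δ (A'.count true) C') : A = A' ∧ C = C' ∧ B = B' := by
  have hA : A = A' := by
    obtain ⟨D, rfl⟩ := hC.1
    obtain ⟨D', rfl⟩ := hC'.1
    exact (valley_unique h hc).1
  subst hA
  exact ⟨rfl, hC.unique hC' (by simpa using h)⟩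

/-- A `δ`-excursion does not lose up steps when down steps are moved to the right of the
word, the up step at which it starts being fixed. -/
theorem IsRelExc.count_le_of_downsBefore_le {δ : ℕ → ℤ} (hδ : IsIncFun δ)
    {A C B A' C' B' : List Bool} (hC : IsRelExc δ (A.count true) C)
    (hC' : IsRelExc δ (A'.count true) C') (ha : A'.count true = A.count true)
    (hle : ∀ k, downsBefore (A' ++ false :: (C' ++ B')) k ≤
      downsBefore (A ++ false :: (C ++ B)) k)
    (heq : downsBefore (A' ++ false :: (C' ++ B')) (A.count true) =
      downsBefore (A ++ false :: (C ++ B)) (A.count true)) :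
    C.count true ≤ C'.count true := by
  by_contra! hlt
  have h1 := hC.downsBefore_lt hδ _ hC'.count_pos hlt
  have h2 := hC'.2.1
  have h3 := hle (A.count true + C'.count true)
  have hpos := hC.count_pos
  have hpos' := hC'.count_pos
  have hz : ∀ {D : List Bool} {b : ℕ}, IsRelExc δ b D → downsBefore D 0 = 0 := by
    rintro D b ⟨⟨D', rfl⟩, -⟩
    rfl
  rw [relAlt, ha] at h2
  simp [downsBefore_append, downsBefore, ha, hpos, hpos', hz hC, hz hC'] at heq
  simp [downsBefore_append, downsBefore, ha, hlt] at h3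
  omega

theorem DeltaRot.eq_of_altLE {δ : ℕ → ℤ} (hδ : IsIncFun δ) {P Q R : List Bool}
    (hQ : DeltaRot δ P Q) (hR : DeltaRot δ P R) (hle : altLE δ R Q) : R = Q := by
  obtain ⟨A, C, B, hP, rfl, hC⟩ := (deltaRot_iff δ P Q).1 hQ
  obtain ⟨A', C', B', hP', rfl, hC'⟩ := (deltaRot_iff δ P R).1 hR
  have hpos := hC.count_pos
  have hpos' := hC'.count_pos
  have rQ : ∀ k, downsBefore P k = _ := fun k => by rw [hP, downsBefore_rotation]
  have rR : ∀ k, downsBefore P k = _ := fun k => by rw [hP', downsBefore_rotation]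
  by_cases ha : A.count true = A'.count true
  · obtain ⟨rfl, rfl, rfl⟩ := rotation_unique (hP.symm.trans hP') ha hC hC'
    rfl
  exfalso
  have hRa' := rR (A'.count true)
  rw [if_pos (by omega)] at hRa'
  have hQa' := rQ (A'.count true)
  have hle' := hle.downsBefore_le (A'.count true)
  have hin : A.count true < A'.count true ∧ A'.count true < A.count true + C.count true := by
    split_ifs at hQa' <;> omega
  rw [if_pos (by omega)] at hQa'
  have hQa := rQ (A.count true)
  rw [if_pos (by omega)] at hQa
  have hRA := rR (A.count true)
  rw [if_neg (by omega)] at hRA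
  have hRP := hR.downsBefore_le
  have hRlt : downsBefore (A' ++ (C' ++ false :: B')) (A'.count true) <
    downsBefore P (A'.count true) := by omega
  have hRa : downsBefore (A' ++ (C' ++ false :: B')) (A.count true) =
    downsBefore P (A.count true) := by omega
  clear hle' hRa' hRA rR hR
  generalize A' ++ (C' ++ false :: B') = S at *
  induction hle using Relation.ReflTransGen.head_induction_on with
  | refl => omega
  | head hST hTQ ih =>
    rename_i S T
    have hTQ : altLE δ T (A ++ (C ++ false :: B)) := hTQ
    have hTS := hST.downsBefore_le
    have hTP := fun k => (hTS k).trans (hRP k)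
    have hTlt := (hTS (A'.count true)).trans_lt hRlt
    by_cases hT : downsBefore T (A.count true) = downsBefore P (A.count true)
    · exact ih hTP hTlt hT
    obtain ⟨A₂, C₂, B₂, rfl, rfl, hC₂⟩ := (deltaRot_iff δ S T).1 hST
    have rT := downsBefore_rotation A₂ C₂ B₂
    have hpos₂ := hC₂.count_pos
    have h1 : A₂.count true ≤ A.count true := by
      have := rT (A.count true)
      split_ifs at this <;> omega
    have h2 : A₂.count true = A.count true := by
      by_contra hne
      have h3 := rT (A₂.count true)
      rw [if_pos (by omega)] at h3
      have h4 := rQ (A₂.count true)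
      rw [if_neg (by omega)] at h4
      have h5 := hTQ.downsBefore_le (A₂.count true)
      have h6 := hRP (A₂.count true)
      omega
    subst hP
    have h3 := hC.count_le_of_downsBefore_le hδ hC₂ h2 hRP hRa
    have h4 := rT (A'.count true)
    rw [if_pos (by omega)] at h4
    have h5 := hTQ.downsBefore_le (A'.count true)
    omega

theorem covIn_iff_deltaRot {δ : ℕ → ℤ} (hδ : IsIncFun δ) {n : ℕ} {P Q : List Bool} :
    CovIn (DyckSet n) (altLE δ) P Q ↔ IsDyckWord n P ∧ DeltaRot δ P Q := by
  constructor
  · rintro ⟨hP, -, ⟨hle, hnle⟩, hcov⟩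
    refine ⟨hP, ?_⟩
    rcases Relation.ReflTransGen.cases_head hle with rfl | ⟨R, h1, h2⟩
    · exact absurd hle hnle
    · have h3 : altLE δ Q R := by
        by_contra h3
        exact hcov R (h1.isDyckWord hP) ⟨⟨.single h1, h1.not_altLE⟩, h2, h3⟩
      rwa [h3.antisymm h2]
  · rintro ⟨hP, h⟩
    refine ⟨hP, h.isDyckWord hP, ⟨.single h, h.not_altLE⟩, ?_⟩
    rintro R - ⟨⟨h1, h2⟩, h3, h4⟩
    rcases Relation.ReflTransGen.cases_head h1 with rfl | ⟨S, h5, h6⟩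
    · exact h2 h1
    · obtain rfl := h.eq_of_altLE hδ h5 (Relation.ReflTransGen.trans h6 h3)
      exact h4 h6

theorem exists_rotation {δ : ℕ → ℤ} (hδ : IsIncFun δ) {n : ℕ} {A B : List Bool}
    (h : IsDyckWord n (A ++ false :: true :: B)) :
    ∃ C D, true :: B = C ++ D ∧ IsRelExc δ (A.count true) C := by
  refine exists_isRelExc_take δ hδ _ B ?_
  obtain ⟨h1, h2, h3⟩ := h
  have h4 := h3 (A ++ [false]) ⟨true :: B, by simp⟩
  have h5 : ∑ l ∈ Finset.range ((true :: B).count true), δ (A.count true + l + 1) ≤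
      (true :: B).count true := by
    refine (Finset.sum_le_card_nsmul _ _ 1 fun l _ => ?_).trans (by simp)
    rcases hδ (A.count true + l + 1) with h | h <;> omega
  rw [relAlt]
  simp only [List.count_append, List.count_cons] at *
  simp at *
  omega

open Classical in
/-- The `δ`-rotation of the word `A d u B` at the displayed valley. -/
noncomputable def valleyRot (δ : ℕ → ℤ) (v : List Bool × List Bool) : List Bool :=
  if h : ∃ Q : List Bool, ∃ C D, true :: v.2 = C ++ D ∧ IsRelExc δ (v.1.count true) C ∧
    Q = v.1 ++ (C ++ false :: D) then h.choose else []

theorem valleyRot_spec {δ : ℕ → ℤ} (hδ : IsIncFun δ) {n : ℕ} {A B : List Bool}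
    (h : IsDyckWord n (A ++ false :: true :: B)) :
    ∃ C D, true :: B = C ++ D ∧ IsRelExc δ (A.count true) C ∧
      valleyRot δ (A, B) = A ++ (C ++ false :: D) := by
  obtain ⟨C, D, h1, h2⟩ := exists_rotation hδ h
  have hex : ∃ Q : List Bool, ∃ C D, true :: B = C ++ D ∧ IsRelExc δ (A.count true) C ∧
    Q = A ++ (C ++ false :: D) := ⟨_, C, D, h1, h2, rfl⟩
  rw [valleyRot, dif_pos hex]
  exact hex.choose_spec

theorem deltaRot_iff_valleyRot {δ : ℕ → ℤ} (hδ : IsIncFun δ) {n : ℕ} {P Q : List Bool}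
    (hP : IsDyckWord n P) :
    DeltaRot δ P Q ↔ ∃ A B, P = A ++ false :: true :: B ∧ Q = valleyRot δ (A, B) := by
  constructor
  · intro h
    obtain ⟨A, C, B, rfl, rfl, hC⟩ := (deltaRot_iff δ P Q).1 h
    obtain ⟨C', hC'⟩ := hC.1
    have heq : true :: (C' ++ B) = C ++ B := by simp [hC']
    refine ⟨A, C' ++ B, by rw [heq], ?_⟩
    obtain ⟨C₁, D₁, h1, h2, h3⟩ := valleyRot_spec hδ (A := A) (B := C' ++ B) (heq ▸ hP)
    obtain ⟨rfl, rfl⟩ := hC.unique h2 (heq.symm.trans h1)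
    exact h3.symm
  · rintro ⟨A, B, rfl, rfl⟩
    obtain ⟨C, D, h1, h2, h3⟩ := valleyRot_spec hδ hP
    exact (deltaRot_iff _ _ _).2 ⟨A, C, D, by rw [h1], h3, h2⟩

theorem valleyRot_injective {δ : ℕ → ℤ} (hδ : IsIncFun δ) {n : ℕ} {A B A' B' : List Bool}
    (h : IsDyckWord n (A ++ false :: true :: B))
    (heq : A ++ false :: true :: B = A' ++ false :: true :: B')
    (hrot : valleyRot δ (A, B) = valleyRot δ (A', B')) : A = A' ∧ B = B' := by
  refine valley_unique heq ?_
  obtain ⟨C, D, h1, h2, h3⟩ := valleyRot_spec hδ h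
  obtain ⟨C', D', h1', h2', h3'⟩ := valleyRot_spec hδ (heq ▸ h)
  rw [h1, h1'] at heq
  rw [h3, h3'] at hrot
  have hpos := h2.count_pos
  have hpos' := h2'.count_pos
  have e : ∀ k, _ = _ := fun k => (downsBefore_rotation A C D k).symm.trans
    (heq ▸ downsBefore_rotation A' C' D' k)
  simp only [hrot, add_right_inj] at e
  have e1 := e (A.count true)
  have e2 := e (A'.count true)
  split_ifs at e1 e2 <;> omega

theorem ncard_valleys (P : List Bool) :
    {v : List Bool × List Bool | P = v.1 ++ false :: true :: v.2}.ncard = valleys P := by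
  have hset : {v : List Bool × List Bool | P = v.1 ++ false :: true :: v.2} =
      (fun q => (P.take q, P.drop (q + 2))) '' ↑((Finset.range P.length).filter
        fun q => (!P.getD q true && P.getD (q + 1) false) = true) := by
    ext ⟨A, B⟩
    simp only [Set.mem_ofPred_eq, Set.mem_image, Finset.coe_filter, Finset.mem_range,
      Prod.mk.injEq, Bool.and_eq_true, Bool.not_eq_true']
    constructor
    · rintro rfl
      exact ⟨A.length, by simp, by simp, by simp⟩
    · rintro ⟨q, ⟨h1, h2, h3⟩, rfl, rfl⟩
      have h4 : q + 1 < P.length := by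
        by_contra h4
        simp [List.getD_eq_getElem?_getD, List.getElem?_eq_none (not_lt.1 h4)] at h3
      rw [List.getD_eq_getElem _ _ h1] at h2
      rw [List.getD_eq_getElem _ _ h4] at h3
      rw [← h2, ← h3, List.getElem_cons_drop, List.getElem_cons_drop, List.take_append_drop]
  rw [hset, Set.InjOn.ncard_image, Set.ncard_coe_finset, valleys,
    ← List.toFinset_range, ← List.toFinset_filter, List.toFinset_card_of_nodup]
  · exact List.nodup_range.filter _
  · intro q hq q' hq' h
    simp only [Finset.coe_filter, Finset.mem_range, Set.mem_ofPred_eq] at hq hq'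
    have := congrArg (fun v => v.1.length) h
    simp only [List.length_take] at this
    omega

theorem ncard_dyckSet (n : ℕ) : (DyckSet n).ncard = catalan n := by
  let toStep : Bool → DyckStep := fun b => if b then .U else .D
  let ofStep : DyckStep → Bool := fun s => if s = .U then true else false
  have h12 : ∀ b, ofStep (toStep b) = b := by decide
  have h21 : ∀ s, toStep (ofStep s) = s := by intro s; cases s <;> rfl
  have hU : ∀ w : List Bool, (w.map toStep).count .U = w.count true := fun w =>
    List.count_map_of_injective w toStep (Function.LeftInverse.injective h12) true
  have hD : ∀ w : List Bool, (w.map toStep).count .D = w.count false := fun w =>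
    List.count_map_of_injective w toStep (Function.LeftInverse.injective h12) false
  have hmap : ∀ l : List DyckStep, (l.map ofStep).map toStep = l := fun l => by
    simp [Function.comp_def, h21]
  have hmap' : ∀ l : List Bool, (l.map toStep).map ofStep = l := fun l => by
    simp [Function.comp_def, h12]
  have hT : ∀ l : List DyckStep, (l.map ofStep).count true = l.count .U := fun l => by
    rw [← hU, hmap]
  have hF : ∀ l : List DyckStep, (l.map ofStep).count false = l.count .D := fun l => by
    rw [← hD, hmap]
  let e : DyckSet n ≃ {p : DyckWord // p.semilength = n} :=
    { toFun := fun w => ⟨⟨w.1.map toStep, by rw [hU, hD, w.2.1, w.2.2.1], fun i => by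
          rw [← List.map_take, hU, hD]; exact w.2.2.2 _ (List.take_prefix _ _)⟩, by
          rw [DyckWord.semilength, hU, w.2.1]⟩
      invFun := fun p => ⟨p.1.toList.map ofStep, by
        refine ⟨by rw [hT]; exact p.2, ?_, fun q hq => ?_⟩
        · rw [hF, ← p.1.count_U_eq_count_D]; exact p.2
        · rw [List.prefix_iff_eq_take.1 hq, ← List.map_take, hT, hF]
          exact p.1.count_D_le_count_U _⟩
      left_inv := fun w => Subtype.ext (hmap' w.1)
      right_inv := fun p => Subtype.ext (DyckWord.ext (hmap p.1.toList)) }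
  rw [← DyckWord.card_dyckWord_semilength_eq_catalan, ← Nat.card_eq_fintype_card,
    ← Nat.card_congr e, Nat.card_coe_set_eq]

theorem catalan_pos (n : ℕ) : 0 < catalan n := by
  have h1 := succ_mul_catalan_eq_centralBinom n
  have h2 := Nat.centralBinom_pos n
  exact Nat.pos_of_ne_zero fun h => by simp [h] at h1; omega

theorem finite_dyckSet (n : ℕ) : (DyckSet n).Finite :=
  Set.finite_of_ncard_pos (by rw [ncard_dyckSet]; exact catalan_pos n)

theorem IsDyckWord.length_eq {n : ℕ} {w : List Bool} (h : IsDyckWord n w) :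
    w.length = 2 * n := by
  have := List.count_true_add_count_false w
  rw [h.1, h.2.1] at this
  omega

/-- The factorizations of the Dyck words of size `m` into two factors. -/
theorem ncard_dyck_splittings (m : ℕ) :
    {v : List Bool × List Bool | IsDyckWord m (v.1 ++ v.2)}.ncard =
      (2 * m + 1) * catalan m := by
  have hset : {v : List Bool × List Bool | IsDyckWord m (v.1 ++ v.2)} =
      (fun x : List Bool × ℕ => (x.1.take x.2, x.1.drop x.2)) ''
        (DyckSet m ×ˢ (Finset.range (2 * m + 1) : Set ℕ)) := by
    ext ⟨A, B⟩
    simp only [Set.mem_ofPred_eq, Set.mem_image, Set.mem_prod, Finset.coe_range, Set.mem_Iio,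
      Prod.mk.injEq, Prod.exists]
    constructor
    · intro h
      have := h.length_eq
      rw [List.length_append] at this
      exact ⟨A ++ B, A.length, ⟨h, by omega⟩, by simp, by simp⟩
    · rintro ⟨P, q, ⟨h, -⟩, rfl, rfl⟩
      rw [List.take_append_drop]
      exact h
  rw [hset, Set.InjOn.ncard_image, Set.ncard_prod, ncard_dyckSet, Set.ncard_coe_finset,
    Finset.card_range, mul_comm]
  rintro ⟨P, q⟩ ⟨hP, hq⟩ ⟨P', q'⟩ ⟨hP', hq'⟩ h
  simp only [Prod.mk.injEq, Finset.coe_range, Set.mem_Iio] at h hq hq' ⊢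
  constructor
  · rw [← List.take_append_drop q P, h.1, h.2, List.take_append_drop]
  · have := congrArg List.length h.1
    rw [List.length_take, List.length_take, IsDyckWord.length_eq hP,
      IsDyckWord.length_eq hP'] at this
    omega

theorem isDyckWord_insert_valley (m : ℕ) (A B : List Bool) :
    IsDyckWord (m + 1) (A ++ false :: true :: B) ↔
      IsDyckWord m (A ++ B) ∧ A.count true ≠ A.count false := by
  simp only [isDyckWord_iff_downsBefore, downsBefore_append, List.count_append,
    List.count_cons]
  simp only [beq_self_eq_true, if_true, Bool.false_eq_true, Bool.true_eq_false, beq_iff_eq,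
    if_false, add_zero]
  constructor
  · rintro ⟨h1, h2, h3⟩
    have h4 := h3 (A.count true)
    simp [downsBefore] at h4
    refine ⟨⟨by omega, by omega, fun k => ?_⟩, by omega⟩
    have h5 := h3 k
    have h6 := h3 (k + 1)
    split_ifs at h5 h6 ⊢
    · omega
    · omega
    · omega
    · have h7 : k + 1 - A.count true = (k - A.count true) + 1 := by omega
      rw [h7] at h6
      simp only [downsBefore] at h6
      omega
  · rintro ⟨⟨h1, h2, h3⟩, h4⟩
    refine ⟨by omega, by omega, fun k => ?_⟩
    have h0 := h3 (A.count true)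
    simp at h0
    have h5 := h3 k
    have h6 := h3 (k - 1)
    split_ifs at h5 ⊢
    · omega
    · obtain ⟨j, rfl⟩ := Nat.exists_eq_add_of_le (not_lt.1 ‹_›)
      cases j with
      | zero => simp [downsBefore]; omega
      | succ j =>
        rw [if_neg (by omega)] at h6
        have h7 : A.count true + (j + 1) - 1 - A.count true = j := by omega
        have h8 : A.count true + (j + 1) - A.count true = j + 1 := by omega
        rw [h7] at h6
        rw [h8]
        simp only [downsBefore]
        omega

theorem isDyckWord_append_balanced (m : ℕ) (A B : List Bool) :
    IsDyckWord m (A ++ B) ∧ A.count true = A.count false ↔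
      ∃ ij ∈ Finset.HasAntidiagonal.antidiagonal m, IsDyckWord ij.1 A ∧ IsDyckWord ij.2 B := by
  constructor
  · rintro ⟨⟨h1, h2, h3⟩, h4⟩
    rw [List.count_append] at h1 h2
    refine ⟨(A.count true, B.count true), by simpa using h1, ⟨rfl, h4.symm, fun p hp =>
      h3 p (hp.trans (List.prefix_append A B))⟩, rfl, by omega, fun p hp => ?_⟩
    have := h3 (A ++ p) ((List.prefix_append_right_inj A).2 hp)
    rw [List.count_append, List.count_append] at this
    omega
  · rintro ⟨⟨i, j⟩, hij, hA, hB⟩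
    rw [isDyckWord_iff_downsBefore] at hA hB ⊢
    obtain ⟨hA1, hA2, hA3⟩ := hA
    obtain ⟨hB1, hB2, hB3⟩ := hB
    simp only [Finset.HasAntidiagonal.mem_antidiagonal] at *
    refine ⟨⟨by rw [List.count_append]; omega, by rw [List.count_append]; omega,
      fun k => ?_⟩, by omega⟩
    rw [downsBefore_append]
    have := hA3 k
    have := hB3 (k - A.count true)
    split_ifs <;> omega

theorem ncard_dyck_balanced_splittings (m : ℕ) :
    {v : List Bool × List Bool | IsDyckWord m (v.1 ++ v.2) ∧
      v.1.count true = v.1.count false}.ncard = catalan (m + 1) := by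
  classical
  let F : ℕ → Finset (List Bool) := fun i => (finite_dyckSet i).toFinset
  have hF : ∀ i, (F i).card = catalan i := fun i => by
    rw [← ncard_dyckSet, Set.ncard_eq_toFinset_card _ (finite_dyckSet i)]
  have hset : {v : List Bool × List Bool | IsDyckWord m (v.1 ++ v.2) ∧
      v.1.count true = v.1.count false} =
      ↑((Finset.HasAntidiagonal.antidiagonal m).biUnion fun ij => F ij.1 ×ˢ F ij.2) := by
    ext ⟨A, B⟩
    rw [Set.mem_ofPred_eq, isDyckWord_append_balanced]
    simp only [F, DyckSet, Finset.coe_biUnion, Finset.coe_product, Set.Finite.coe_toFinset,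
      Set.mem_iUnion, Set.mem_prod, Set.mem_ofPred_eq, Finset.mem_coe, exists_prop]
  rw [hset, Set.ncard_coe_finset, Finset.card_biUnion, catalan_succ']
  · simp only [Finset.card_product, hF]
  · rintro ⟨i, j⟩ - ⟨i', j'⟩ - hne
    rw [Function.onFun, Finset.disjoint_left]
    rintro ⟨A, B⟩ h h'
    simp only [F, Finset.mem_product, Set.Finite.mem_toFinset] at h h'
    exact hne (Prod.ext (h.1.1.symm.trans h'.1.1) (h.2.1.symm.trans h'.2.1))

theorem two_mul_add_one_mul_catalan (m : ℕ) :
    (2 * m + 1) * catalan m = (2 * m + 1).choose (m + 2) + catalan (m + 1) := by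
  have h1 := succ_mul_catalan_eq_centralBinom m
  have h2 := succ_mul_catalan_eq_centralBinom (m + 1)
  have h3 := Nat.succ_mul_centralBinom_succ m
  have h4 := Nat.choose_succ_right_eq (2 * m + 1) (m + 1)
  have h5 := Nat.add_one_mul_choose_eq (2 * m) m
  rw [← Nat.centralBinom_eq_two_mul_choose] at h5
  rw [show 2 * m + 1 - (m + 1) = m by omega] at h4
  refine Nat.eq_of_mul_eq_mul_left (show 0 < (m + 1) * (m + 2) by positivity) ?_
  linear_combination (2 * m + 1) * (m + 2) * h1 - (m + 1) * h2 - h3 - (m + 1) * h4 + m * h5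

theorem ncard_dyck_valleys (n : ℕ) :
    {v : List Bool × List Bool | IsDyckWord n (v.1 ++ false :: true :: v.2)}.ncard =
      (2 * n - 1).choose (n + 1) := by
  cases n with
  | zero =>
    rw [show {v : List Bool × List Bool | IsDyckWord 0 (v.1 ++ false :: true :: v.2)} = ∅ from
      Set.eq_empty_of_forall_notMem fun v hv => by simpa using IsDyckWord.length_eq hv]
    simp
  | succ m =>
    simp only [isDyckWord_insert_valley]
    have hfin : {v : List Bool × List Bool | IsDyckWord m (v.1 ++ v.2)}.Finite :=
      Set.finite_of_ncard_pos (by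
        rw [ncard_dyck_splittings]
        exact Nat.mul_pos (by omega) (catalan_pos m))
    have h1 := Set.ncard_inter_add_ncard_sdiff_eq_ncard
      {v : List Bool × List Bool | IsDyckWord m (v.1 ++ v.2)}
      {v | v.1.count true = v.1.count false} hfin
    have h2 := ncard_dyck_balanced_splittings m
    have h3 := two_mul_add_one_mul_catalan m
    rw [ncard_dyck_splittings, ← Set.ofPred_and, h2] at h1
    have h4 : {v : List Bool × List Bool | IsDyckWord m (v.1 ++ v.2)} \
        {v | v.1.count true = v.1.count false} =
        {v | IsDyckWord m (v.1 ++ v.2) ∧ v.1.count true ≠ v.1.count false} := rfl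
    rw [h4] at h1
    rw [show 2 * (m + 1) - 1 = 2 * m + 1 by omega, show m + 1 + 1 = m + 2 by omega]
    omega

theorem ncard_covIn_eq_valleys {δ : ℕ → ℤ} (hδ : IsIncFun δ) {n : ℕ} {P : List Bool}
    (hP : IsDyckWord n P) :
    {Q : List Bool | CovIn (DyckSet n) (altLE δ) P Q}.ncard = valleys P := by
  have hset : {Q : List Bool | CovIn (DyckSet n) (altLE δ) P Q} =
      valleyRot δ '' {v | P = v.1 ++ false :: true :: v.2} := by
    ext Q
    simp only [Set.mem_ofPred_eq, covIn_iff_deltaRot hδ, hP, true_and,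
      deltaRot_iff_valleyRot hδ hP, Set.mem_image, Prod.exists, eq_comm (a := Q)]
  rw [hset, Set.InjOn.ncard_image, ncard_valleys]
  rintro ⟨A, B⟩ (h : P = _) ⟨A', B'⟩ (h' : P = _) hrot
  exact Prod.ext_iff.2 (valleyRot_injective hδ (h ▸ hP) (h.symm.trans h') hrot)

theorem ncard_covIn {δ : ℕ → ℤ} (hδ : IsIncFun δ) (n : ℕ) :
    {pq : List Bool × List Bool | CovIn (DyckSet n) (altLE δ) pq.1 pq.2}.ncard =
      (2 * n - 1).choose (n + 1) := by
  have hset : {pq : List Bool × List Bool | CovIn (DyckSet n) (altLE δ) pq.1 pq.2} =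
      (fun v => (v.1 ++ false :: true :: v.2, valleyRot δ v)) ''
        {v | IsDyckWord n (v.1 ++ false :: true :: v.2)} := by
    ext ⟨P, Q⟩
    simp only [Set.mem_ofPred_eq, covIn_iff_deltaRot hδ, Set.mem_image, Prod.exists,
      Prod.mk.injEq]
    constructor
    · rintro ⟨hP, h⟩
      obtain ⟨A, B, rfl, rfl⟩ := (deltaRot_iff_valleyRot hδ hP).1 h
      exact ⟨A, B, hP, rfl, rfl⟩
    · rintro ⟨A, B, hP, rfl, rfl⟩
      exact ⟨hP, (deltaRot_iff_valleyRot hδ hP).2 ⟨A, B, rfl, rfl⟩⟩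
  rw [hset, Set.InjOn.ncard_image, ncard_dyck_valleys]
  rintro ⟨A, B⟩ h ⟨A', B'⟩ - heq
  obtain ⟨h1, h2⟩ := Prod.ext_iff.1 heq
  exact Prod.ext_iff.2 (valleyRot_injective hδ h h1 h2)

/-- in `Tam^δ_n` the number of upper covers of a Dyck word `P` is its
number of valleys; hence all alt-Tamari posets of size `n` have the same number of
covering relations, namely `binom (2n-1) (n-2)` (written in the symmetric form
`binom (2n-1) (n+1)` to avoid the truncation of natural subtraction). -/
theorem stmt17 (n : ℕ) (δ : ℕ → ℤ) (hδ : IsIncFun δ) :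
    (∀ P : List Bool, IsDyckWord n P →
      {Q : List Bool | CovIn (DyckSet n) (altLE δ) P Q}.ncard = valleys P) ∧
    (∀ δ' : ℕ → ℤ, IsIncFun δ' →
      {pq : List Bool × List Bool | CovIn (DyckSet n) (altLE δ) pq.1 pq.2}.ncard =
        {pq : List Bool × List Bool | CovIn (DyckSet n) (altLE δ') pq.1 pq.2}.ncard) ∧
    {pq : List Bool × List Bool | CovIn (DyckSet n) (altLE δ) pq.1 pq.2}.ncard
      = (2 * n - 1).choose (n + 1) := by
  exact ⟨fun P hP => ncard_covIn_eq_valleys hδ hP,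
    fun δ' hδ' => (ncard_covIn hδ n).trans (ncard_covIn hδ' n).symm, ncard_covIn hδ n⟩
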